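/- Let A be a unital C*-algebra, J ⊆ A a closed two-sided ideal, and X ⊆ A an operator system. Then: (i) for every unital *-representation Π : B(X,J) → B(H) annihilating M₂(J), there exists a unique *-representation π : C*(X)+J → B(H) annihilating J such that the pair (Π,π) is (X,J)-adapted; (ii) for every unital *-representation π : C*(X)+J → B(H) annihilating J, there exists a unique unital *-representation Π : B(X,J) → B(H) annihilating M₂(J) such that the pair (Π,π) is (X,J)-adapted. -/

import Mathlib

noncomputable section

namespace ArvesonCounterexample

/-- The C*-subalgebra of `A` generated by a subset `X`. -/
def cstarGen (A : Type*) [CStarAlgebra A] (X : Set A) : StarSubalgebra ℂ A :=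
  (StarAlgebra.adjoin ℂ X).topologicalClosure

/-- The set `J + ℂ·1`. -/
def unitize (A : Type*) [CStarAlgebra A] (J : Set A) : Set A :=
  {d | ∃ j ∈ J, ∃ c : ℂ, d = j + c • (1 : A)}

/-- The operator system `S(X,J)` inside `M₂(A)`, consisting of the matrices
`[[x, j], [k, b]]` with `x ∈ X`, `j, k ∈ J` and `b ∈ J + ℂ1`. -/
def opSys (A : Type*) [CStarAlgebra A] (X J : Set A) : Set (Matrix (Fin 2) (Fin 2) A) :=
  {m | m 0 0 ∈ X ∧ m 0 1 ∈ J ∧ m 1 0 ∈ J ∧ m 1 1 ∈ unitize A J}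

/-- The C*-algebra `B(X,J)` generated by `S(X,J)` inside `M₂(A)`. -/
def calg (A : Type*) [CStarAlgebra A] (X J : Set A) :
    StarSubalgebra ℂ (Matrix (Fin 2) (Fin 2) A) :=
  (StarAlgebra.adjoin ℂ (opSys A X J)).topologicalClosure

/-- The C*-subalgebra `C*(X) + J` of `A` (the C*-algebra generated by `C*(X)` and `J`;
since `J` is a closed two-sided ideal this coincides with the sum `C*(X) + J`). -/
def cstarPlus (A : Type*) [CStarAlgebra A] (X J : Set A) : StarSubalgebra ℂ A :=
  (StarAlgebra.adjoin ℂ ((cstarGen A X : Set A) ∪ J)).topologicalClosure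

/-- `J` is a closed two-sided ideal of `A`. -/
structure IsClosedTwoSidedIdeal {A : Type*} [CStarAlgebra A] (J : Set A) : Prop where
  zero_mem : (0 : A) ∈ J
  add_mem : ∀ x ∈ J, ∀ y ∈ J, x + y ∈ J
  mul_mem_left : ∀ (a : A), ∀ j ∈ J, a * j ∈ J
  mul_mem_right : ∀ (a : A), ∀ j ∈ J, j * a ∈ J
  isClosed : IsClosed J

/-- `X` is an operator system in `A`: a unital norm-closed self-adjoint subspace. -/
structure IsOperatorSystem {A : Type*} [CStarAlgebra A] (X : Set A) : Prop where
  one_mem : (1 : A) ∈ X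
  add_mem : ∀ x ∈ X, ∀ y ∈ X, x + y ∈ X
  smul_mem : ∀ (c : ℂ), ∀ x ∈ X, c • x ∈ X
  star_mem : ∀ x ∈ X, star x ∈ X
  isClosed : IsClosed X

/-- A map `φ` between star rings is completely positive if each matrix amplification maps
positive elements to positive elements (positivity expressed algebraically as being of the
form `star y * y`). -/
def IsCompletelyPositive {R B : Type*} [Ring R] [StarRing R] [Ring B] [StarRing B]
    (φ : R → B) : Prop :=
  ∀ (n : ℕ) (y : Matrix (Fin n) (Fin n) R),
    ∃ z : Matrix (Fin n) (Fin n) B, (star y * y).map φ = star z * z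

/-- A unital completely positive (linear) map from `R` to `B(H)`. -/
structure IsUCPMap {R : Type*} [Ring R] [Algebra ℂ R] [StarRing R]
    {H : Type*} [NormedAddCommGroup H] [InnerProductSpace ℂ H] [CompleteSpace H]
    (φ : R → (H →L[ℂ] H)) : Prop where
  map_add : ∀ x y, φ (x + y) = φ x + φ y
  map_smul : ∀ (c : ℂ) (x : R), φ (c • x) = c • φ x
  cp : IsCompletelyPositive φ
  map_one : φ 1 = 1

/-- A (not necessarily unital) *-representation of `R` on `B(H)`. -/
structure IsStarRep {R : Type*} [Ring R] [Algebra ℂ R] [StarRing R]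
    {H : Type*} [NormedAddCommGroup H] [InnerProductSpace ℂ H] [CompleteSpace H]
    (π : R → (H →L[ℂ] H)) : Prop where
  map_add : ∀ x y, π (x + y) = π x + π y
  map_smul : ∀ (c : ℂ) (x : R), π (c • x) = c • π x
  map_mul : ∀ x y, π (x * y) = π x * π y
  map_star : ∀ x, π (star x) = star (π x)

/-- A unital *-representation of `R` on `B(H)`. -/
structure IsUnitalStarRep {R : Type*} [Ring R] [Algebra ℂ R] [StarRing R]
    {H : Type*} [NormedAddCommGroup H] [InnerProductSpace ℂ H] [CompleteSpace H]
    (π : R → (H →L[ℂ] H)) : Prop where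
  toIsStarRep : IsStarRep π
  map_one : π 1 = 1

/-- A unital *-representation `ρ` of `B(X,J)` has the unique extension property with respect
to `S(X,J)` if every unital completely positive map on `B(X,J)` agreeing with `ρ` on
`S(X,J)` equals `ρ`. -/
def HasUEP {A : Type*} [CStarAlgebra A] (X J : Set A)
    {H : Type*} [NormedAddCommGroup H] [InnerProductSpace ℂ H] [CompleteSpace H]
    (ρ : ↥(calg A X J) → (H →L[ℂ] H)) : Prop :=
  ∀ Ψ : ↥(calg A X J) → (H →L[ℂ] H), IsUCPMap Ψ →
    (∀ m : ↥(calg A X J), (m : Matrix (Fin 2) (Fin 2) A) ∈ opSys A X J → Ψ m = ρ m) →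
    Ψ = ρ

/-- `ρ` annihilates the ideal `M₂(J)` of `B(X,J)`. -/
def AnnihilatesM2 {A : Type*} [CStarAlgebra A] (X J : Set A)
    {H : Type*} [NormedAddCommGroup H] [InnerProductSpace ℂ H] [CompleteSpace H]
    (ρ : ↥(calg A X J) → (H →L[ℂ] H)) : Prop :=
  ∀ m : ↥(calg A X J), (∀ i j : Fin 2, (m : Matrix (Fin 2) (Fin 2) A) i j ∈ J) → ρ m = 0

/-- `π` (defined on `C*(X)+J`) annihilates `J`. -/
def AnnihilatesJ {A : Type*} [CStarAlgebra A] (X J : Set A)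
    {H : Type*} [NormedAddCommGroup H] [InnerProductSpace ℂ H] [CompleteSpace H]
    (π : ↥(cstarPlus A X J) → (H →L[ℂ] H)) : Prop :=
  ∀ x : ↥(cstarPlus A X J), (x : A) ∈ J → π x = 0

/-- The pair `(ρ, π)` is `(X,J)`-adapted: writing an element of `B(X,J)` as `[[a,b],[c,d]]`
with `a ∈ C*(X)+J`, `b, c ∈ J`, `d ∈ J + ℂ1`, and letting `χ : J + ℂ1 → ℂ` be the quotient
character with kernel `J` (so `χ d = c` exactly when `d - c•1 ∈ J`), one has
`ρ [[a,b],[c,d]] - χ(d)•1 = π (a - χ(d)•1)`. -/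
def IsAdaptedPair {A : Type*} [CStarAlgebra A] (X J : Set A)
    {H : Type*} [NormedAddCommGroup H] [InnerProductSpace ℂ H] [CompleteSpace H]
    (ρ : ↥(calg A X J) → (H →L[ℂ] H)) (π : ↥(cstarPlus A X J) → (H →L[ℂ] H)) : Prop :=
  ∀ (m : ↥(calg A X J)) (c : ℂ) (a' : ↥(cstarPlus A X J)),
    (m : Matrix (Fin 2) (Fin 2) A) 1 1 - c • (1 : A) ∈ J →
    (a' : A) = (m : Matrix (Fin 2) (Fin 2) A) 0 0 - c • (1 : A) →
    ρ m - c • (1 : H →L[ℂ] H) = π a'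

/-!
Modulo `M₂(J)`, an element `m = [[a, b], [c, d]]` of `B(X,J)` with `χ(d) = z` equals
`z • 1 + diag(a - z, 0)`. Hence an adapted pair is linked by `π a = ρ (diag(a, 0))` and, when `π` is
unital, by `ρ m = π a`: these formulas give uniqueness, and they define *-representations because
`a ↦ diag(a, 0)` is a *-homomorphism `C*(X) + J → B(X,J)`, while `m ↦ a` is multiplicative up
to `J`. That `diag(j, 0) ∈ B(X,J)` for `j ∈ J` comes from approximating `j` by products `j * e` with
`e ∈ J` self-adjoint.
-/

section CStarAlgebra

variable {A : Type*} [CStarAlgebra A]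

lemma star_mul_cfc_mul_mul_cfc (b : A) {f : ℝ → ℝ} (hf : ContinuousOn f (spectrum ℝ (star b * b))) :
    star (b * cfc f (star b * b)) * (b * cfc f (star b * b)) =
      cfc (fun x => f x * x * f x) (star b * b) := by
  have hsa : IsSelfAdjoint (cfc f (star b * b)) := cfc_predicate f _
  rw [cfc_mul (fun x => f x * x) f _ (by fun_prop) hf, cfc_mul f (fun x => x) _ hf (by fun_prop),
    cfc_id' ℝ (star b * b), star_mul, hsa.star_eq]
  simp only [mul_assoc]

lemma norm_mul_cfc_star_mul_self_sq_le (b : A) {f : ℝ → ℝ}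
    (hf : ContinuousOn f (spectrum ℝ (star b * b))) {c : ℝ} (hc : 0 ≤ c)
    (hfc : ∀ x ∈ spectrum ℝ (star b * b), |f x * x * f x| ≤ c) :
    ‖b * cfc f (star b * b)‖ ^ 2 ≤ c := by
  rw [sq, ← CStarRing.norm_star_mul_self, star_mul_cfc_mul_mul_cfc b hf]
  exact norm_cfc_le hc hfc

lemma abs_sq_div_mul_mul_sq_div_le {δ : ℝ} (hδ : 0 < δ) (x : ℝ) :
    |δ ^ 2 / (x ^ 2 + δ ^ 2) * x * (δ ^ 2 / (x ^ 2 + δ ^ 2))| ≤ δ := by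
  have hfrac : δ ^ 2 / (x ^ 2 + δ ^ 2) ≤ 1 := div_le_one_of_le₀ (by nlinarith) (by positivity)
  have habs : δ ^ 2 / (x ^ 2 + δ ^ 2) * |x| ≤ δ := by
    rw [div_mul_eq_mul_div, div_le_iff₀ (by positivity), ← sq_abs x]
    nlinarith [mul_nonneg hδ.le (sq_nonneg (|x| - δ)), mul_nonneg (sq_nonneg δ) (abs_nonneg x)]
  rw [abs_mul, abs_mul, abs_of_nonneg (show 0 ≤ δ ^ 2 / (x ^ 2 + δ ^ 2) by positivity)]
  exact (mul_le_of_le_one_right (by positivity) hfrac).trans habs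

lemma exists_isSelfAdjoint_mul_norm_sub_lt (b : A) {ε : ℝ} (hε : 0 < ε) :
    ∃ c : A, IsSelfAdjoint (c * (star b * b)) ∧ ‖b - b * (c * (star b * b))‖ < ε := by
  set δ : ℝ := ε ^ 2 / 2
  have hδ : 0 < δ := by positivity
  have hpos (x : ℝ) : x ^ 2 + δ ^ 2 ≠ 0 := by positivity
  have hg : Continuous fun x : ℝ => x / (x ^ 2 + δ ^ 2) := by fun_prop (disch := exact hpos _)
  have hf : Continuous fun x : ℝ => δ ^ 2 / (x ^ 2 + δ ^ 2) := by fun_prop (disch := exact hpos _)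
  have hmul : cfc (fun x : ℝ => x / (x ^ 2 + δ ^ 2)) (star b * b) * (star b * b) =
      cfc (fun x : ℝ => x / (x ^ 2 + δ ^ 2) * x) (star b * b) := by
    rw [cfc_mul _ (fun x => x) _ hg.continuousOn (by fun_prop), cfc_id' ℝ (star b * b)]
  have hone : 1 - cfc (fun x : ℝ => x / (x ^ 2 + δ ^ 2) * x) (star b * b) =
      cfc (fun x : ℝ => δ ^ 2 / (x ^ 2 + δ ^ 2)) (star b * b) := by
    rw [← cfc_const_one ℝ (star b * b), ← cfc_sub _ _ _ (by fun_prop) (by fun_prop)]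
    congr! 1
    ext x
    have := hpos x
    field_simp
    ring
  refine ⟨_, hmul ▸ cfc_predicate _ _, ?_⟩
  rw [hmul, ← mul_one_sub, hone]
  refine lt_of_pow_lt_pow_left₀ 2 hε.le ?_
  calc ‖b * cfc (fun x : ℝ => δ ^ 2 / (x ^ 2 + δ ^ 2)) (star b * b)‖ ^ 2
      ≤ δ := norm_mul_cfc_star_mul_self_sq_le b hf.continuousOn hδ.le
        fun x _ => abs_sq_div_mul_mul_sq_div_le hδ x
    _ < ε ^ 2 := half_lt_self (by positivity)

lemma mem_unitize_iff {J : Set A} {d : A} : d ∈ unitize A J ↔ ∃ c : ℂ, d - c • (1 : A) ∈ J :=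
  ⟨fun ⟨j, hj, c, hd⟩ => ⟨c, by simpa [hd] using hj⟩, fun ⟨c, hc⟩ => ⟨_, hc, c, by simp⟩⟩

lemma subset_unitize {J : Set A} : J ⊆ unitize A J :=
  fun j hj => mem_unitize_iff.2 ⟨0, by simpa using hj⟩

end CStarAlgebra

namespace IsClosedTwoSidedIdeal

variable {A : Type*} [CStarAlgebra A] {J : Set A}

lemma mem_closure_mul_isSelfAdjoint (hJ : IsClosedTwoSidedIdeal J) {j : A} (hj : j ∈ J) :
    j ∈ closure ((j * ·) '' {e | e ∈ J ∧ IsSelfAdjoint e}) := by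
  refine Metric.mem_closure_iff.2 fun ε hε => ?_
  obtain ⟨c, hc, hlt⟩ := exists_isSelfAdjoint_mul_norm_sub_lt j hε
  have hcJ : c * (star j * j) ∈ J := hJ.mul_mem_left _ _ (hJ.mul_mem_left _ _ hj)
  exact ⟨_, Set.mem_image_of_mem _ ⟨hcJ, hc⟩, by rwa [dist_eq_norm]⟩

lemma star_mem (hJ : IsClosedTwoSidedIdeal J) {j : A} (hj : j ∈ J) : star j ∈ J := by
  refine closure_minimal ?_ (hJ.isClosed.preimage continuous_star)
    (hJ.mem_closure_mul_isSelfAdjoint hj)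
  rintro _ ⟨e, ⟨he, hsa⟩, rfl⟩
  rw [Set.mem_preimage, star_mul, hsa.star_eq]
  exact hJ.mul_mem_right _ _ he

/-- A closed two-sided ideal, given as a set, bundled as a subspace. -/
def toSubmodule (hJ : IsClosedTwoSidedIdeal J) : Submodule ℂ A where
  carrier := J
  zero_mem' := hJ.zero_mem
  add_mem' hx hy := hJ.add_mem _ hx _ hy
  smul_mem' c x hx := by simpa using hJ.mul_mem_left (c • 1) x hx

lemma smul_mem (hJ : IsClosedTwoSidedIdeal J) (c : ℂ) {j : A} (hj : j ∈ J) : c • j ∈ J :=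
  hJ.toSubmodule.smul_mem c hj

lemma isClosed_unitize (hJ : IsClosedTwoSidedIdeal J) : IsClosed (unitize A J) := by
  have hsup : unitize A J = (hJ.toSubmodule ⊔ Submodule.span ℂ {1} : Submodule ℂ A) := by
    ext d
    simp [unitize, Submodule.mem_sup, Submodule.mem_span_singleton, toSubmodule, eq_comm]
  rw [hsup]
  exact Submodule.isClosed_sup_finiteDimensional _ _ hJ.isClosed

/-- The set `J + ℂ1` as a unital *-subalgebra of `A`. -/
def unitization (hJ : IsClosedTwoSidedIdeal J) : StarSubalgebra ℂ A where
  carrier := unitize A J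
  mul_mem' {x y} hx hy := by
    obtain ⟨⟨c, hc⟩, ⟨d, hd⟩⟩ := mem_unitize_iff.1 hx, mem_unitize_iff.1 hy
    have hxy : x * y - (c * d) • (1 : A) = (x - c • 1) * y + c • (y - d • 1) := by
      simp [sub_mul, smul_sub, smul_smul]
    refine mem_unitize_iff.2 ⟨c * d, hxy ▸ ?_⟩
    exact hJ.add_mem _ (hJ.mul_mem_right _ _ hc) _ (hJ.smul_mem c hd)
  add_mem' {x y} hx hy := by
    obtain ⟨⟨c, hc⟩, ⟨d, hd⟩⟩ := mem_unitize_iff.1 hx, mem_unitize_iff.1 hy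
    refine mem_unitize_iff.2 ⟨c + d, ?_⟩
    rw [add_smul, add_sub_add_comm]
    exact hJ.add_mem _ hc _ hd
  algebraMap_mem' c := mem_unitize_iff.2 ⟨c, by
    simpa [Algebra.algebraMap_eq_smul_one] using hJ.zero_mem⟩
  star_mem' {x} hx := by
    obtain ⟨c, hc⟩ := mem_unitize_iff.1 hx
    exact mem_unitize_iff.2 ⟨star c, by simpa using hJ.star_mem hc⟩

end IsClosedTwoSidedIdeal

section GeneratedAlgebras

variable {A : Type*} [CStarAlgebra A] {X J : Set A}

lemma isClosed_calg : IsClosed (calg A X J : Set (Matrix (Fin 2) (Fin 2) A)) :=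
  StarSubalgebra.isClosed_topologicalClosure _

lemma isClosed_cstarPlus : IsClosed (cstarPlus A X J : Set A) :=
  StarSubalgebra.isClosed_topologicalClosure _

lemma opSys_subset_calg : opSys A X J ⊆ calg A X J :=
  (StarAlgebra.subset_adjoin ℂ _).trans subset_closure

lemma ideal_subset_cstarPlus : J ⊆ cstarPlus A X J :=
  Set.subset_union_right.trans ((StarAlgebra.subset_adjoin ℂ _).trans subset_closure)

lemma subset_cstarPlus : X ⊆ cstarPlus A X J :=
  ((StarAlgebra.subset_adjoin ℂ X).trans subset_closure).trans
    (Set.subset_union_left.trans ((StarAlgebra.subset_adjoin ℂ _).trans subset_closure))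

lemma cstarPlus_le {S : StarSubalgebra ℂ A} (hS : IsClosed (S : Set A)) (hXS : X ⊆ S)
    (hJS : J ⊆ S) : cstarPlus A X J ≤ S :=
  StarSubalgebra.topologicalClosure_minimal (StarAlgebra.adjoin_le (Set.union_subset
    (StarSubalgebra.topologicalClosure_minimal (StarAlgebra.adjoin_le hXS) hS) hJS)) hS

lemma calg_le {S : StarSubalgebra ℂ (Matrix (Fin 2) (Fin 2) A)}
    (hS : IsClosed (S : Set (Matrix (Fin 2) (Fin 2) A))) (hle : opSys A X J ⊆ S) :
    calg A X J ≤ S :=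
  StarSubalgebra.topologicalClosure_minimal (StarAlgebra.adjoin_le hle) hS

/-- The *-algebra of all matrices `[[a, b], [c, d]]` with `a ∈ C*(X) + J`, `b, c ∈ J` and
`d ∈ J + ℂ1`, an upper bound for `B(X,J)`. -/
def blockAlgebra (X : Set A) (hJ : IsClosedTwoSidedIdeal J) :
    StarSubalgebra ℂ (Matrix (Fin 2) (Fin 2) A) where
  carrier := opSys A (cstarPlus A X J) J
  mul_mem' {m n} := by
    rintro ⟨hm₀₀, hm₀₁, hm₁₀, hm₁₁⟩ ⟨hn₀₀, hn₀₁, hn₁₀, hn₁₁⟩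
    simp only [opSys, Set.mem_ofPred_eq, Matrix.mul_apply, Fin.sum_univ_two]
    have hJmul {x y : A} (hy : y ∈ J) : x * y ∈ J := hJ.mul_mem_left x y hy
    exact ⟨add_mem (mul_mem hm₀₀ hn₀₀) (ideal_subset_cstarPlus (hJmul hn₁₀)),
      hJ.add_mem _ (hJmul hn₀₁) _ (hJ.mul_mem_right _ _ hm₀₁),
      hJ.add_mem _ (hJ.mul_mem_right _ _ hm₁₀) _ (hJmul hn₁₀),
      hJ.unitization.add_mem (subset_unitize (hJmul hn₀₁)) (hJ.unitization.mul_mem hm₁₁ hn₁₁)⟩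
  add_mem' := by
    rintro m n ⟨hm₀₀, hm₀₁, hm₁₀, hm₁₁⟩ ⟨hn₀₀, hn₀₁, hn₁₀, hn₁₁⟩
    exact ⟨add_mem hm₀₀ hn₀₀, hJ.add_mem _ hm₀₁ _ hn₀₁, hJ.add_mem _ hm₁₀ _ hn₁₀,
      hJ.unitization.add_mem hm₁₁ hn₁₁⟩
  algebraMap_mem' c := by
    have hcX := algebraMap_mem (cstarPlus A X J) c
    have hcJ : algebraMap ℂ A c ∈ unitize A J := hJ.unitization.algebraMap_mem' c
    simp only [opSys, Set.mem_ofPred_eq, Matrix.algebraMap_matrix_apply]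
    exact ⟨hcX, hJ.zero_mem, hJ.zero_mem, hcJ⟩
  star_mem' := by
    rintro m ⟨h₀₀, h₀₁, h₁₀, h₁₁⟩
    exact ⟨star_mem h₀₀, hJ.star_mem h₁₀, hJ.star_mem h₀₁, hJ.unitization.star_mem' h₁₁⟩

lemma isClosed_blockAlgebra (X : Set A) (hJ : IsClosedTwoSidedIdeal J) :
    IsClosed (blockAlgebra X hJ : Set (Matrix (Fin 2) (Fin 2) A)) := by
  have hentry (i k : Fin 2) : Continuous fun m : Matrix (Fin 2) (Fin 2) A => m i k :=
    continuous_id.matrix_elem i k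
  exact (isClosed_cstarPlus.preimage (hentry 0 0)).inter ((hJ.isClosed.preimage (hentry 0 1)).inter
    ((hJ.isClosed.preimage (hentry 1 0)).inter (hJ.isClosed_unitize.preimage (hentry 1 1))))

lemma calg_le_blockAlgebra (hJ : IsClosedTwoSidedIdeal J) : calg A X J ≤ blockAlgebra X hJ :=
  calg_le (isClosed_blockAlgebra X hJ) fun _ ⟨h₀₀, h⟩ => ⟨subset_cstarPlus h₀₀, h⟩

end GeneratedAlgebras

section MatrixSingle

open Matrix

lemma continuous_matrix_single {m n R : Type*} [DecidableEq m] [DecidableEq n] [Zero R]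
    [TopologicalSpace R] (i : m) (j : n) : Continuous (single i j : R → Matrix m n R) :=
  continuous_matrix fun k l => by
    simp only [single, of_apply]
    split_ifs <;> fun_prop

/-- The embedding of a *-algebra `R` into `Mₙ(R)` as the corner of matrices supported at the
`i`-th diagonal entry. -/
def singleDiagHom (𝕜 : Type*) {n R : Type*} [Monoid 𝕜] [NonUnitalSemiring R]
    [DistribMulAction 𝕜 R] [StarRing R] [Fintype n] [DecidableEq n] (i : n) :
    R →⋆ₙₐ[𝕜] Matrix n n R where
  toFun a := single i i a
  map_smul' c a := (smul_single c i i a).symm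
  map_zero' := single_zero i i
  map_add' := single_add i i
  map_mul' a b := (single_mul_single_same a i i i b).symm
  map_star' a := (conjTranspose_single i i a).symm

end MatrixSingle

section Corner

variable {A : Type*} [CStarAlgebra A] {X J : Set A}

lemma single_zero_zero_mem_calg (hJ : IsClosedTwoSidedIdeal J) {x : A} (hx : x ∈ X) :
    Matrix.single 0 0 x ∈ calg A X J :=
  opSys_subset_calg (by simp [opSys, hx, hJ.zero_mem, subset_unitize hJ.zero_mem])

lemma mem_calg_of_zero_zero_eq_zero (hX : X.Nonempty) (hJ : IsClosedTwoSidedIdeal J)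
    {m : Matrix (Fin 2) (Fin 2) A} (h₀₀ : m 0 0 = 0) (h₀₁ : m 0 1 ∈ J) (h₁₀ : m 1 0 ∈ J)
    (h₁₁ : m 1 1 ∈ unitize A J) : m ∈ calg A X J := by
  obtain ⟨x, hx⟩ := hX
  -- If `0 ∉ X` then `m ∉ S(X,J)`, but `m` is a difference of two elements of `S(X,J)`.
  have hadd : m + Matrix.single 0 0 x ∈ calg A X J :=
    opSys_subset_calg (by simp [opSys, *])
  simpa using sub_mem hadd (single_zero_zero_mem_calg hJ hx)

lemma single_zero_zero_one_mem_calg (hX : X.Nonempty) (hJ : IsClosedTwoSidedIdeal J) :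
    Matrix.single 0 0 (1 : A) ∈ calg A X J := by
  have hone : (1 : A) ∈ unitize A J := hJ.unitization.one_mem
  have h : (Matrix.single 1 1 1 : Matrix (Fin 2) (Fin 2) A) ∈ calg A X J :=
    mem_calg_of_zero_zero_eq_zero hX hJ (by simp) (by simpa using hJ.zero_mem)
      (by simpa using hJ.zero_mem) (by simpa using hone)
  have hsub : (Matrix.single 0 0 1 : Matrix (Fin 2) (Fin 2) A) = 1 - Matrix.single 1 1 1 := by
    ext i k
    fin_cases i <;> fin_cases k <;> simp
  exact hsub ▸ sub_mem (one_mem _) h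

lemma single_zero_zero_mul_mem_calg (hX : X.Nonempty) (hJ : IsClosedTwoSidedIdeal J) {j k : A}
    (hj : j ∈ J) (hk : k ∈ J) : Matrix.single 0 0 (j * k) ∈ calg A X J := by
  have h₀ := hJ.zero_mem
  have h₀₁ : (Matrix.single 0 1 j : Matrix (Fin 2) (Fin 2) A) ∈ calg A X J :=
    mem_calg_of_zero_zero_eq_zero hX hJ (by simp) (by simpa) (by simpa)
      (by simpa using subset_unitize h₀)
  have h₁₀ : (Matrix.single 1 0 k : Matrix (Fin 2) (Fin 2) A) ∈ calg A X J :=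
    mem_calg_of_zero_zero_eq_zero hX hJ (by simp) (by simpa) (by simpa)
      (by simpa using subset_unitize h₀)
  simpa using mul_mem h₀₁ h₁₀

/-- The *-algebra of all `a` with `diag(a, 0) ∈ B(X,J)`. -/
def cornerAlgebra (hX : X.Nonempty) (hJ : IsClosedTwoSidedIdeal J) : StarSubalgebra ℂ A :=
  ((calg A X J).toNonUnitalStarSubalgebra.comap (singleDiagHom ℂ 0)).toStarSubalgebra
    (single_zero_zero_one_mem_calg hX hJ)

lemma isClosed_cornerAlgebra (hX : X.Nonempty) (hJ : IsClosedTwoSidedIdeal J) :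
    IsClosed (cornerAlgebra hX hJ : Set A) :=
  isClosed_calg.preimage (continuous_matrix_single 0 0)

lemma cstarPlus_le_cornerAlgebra (hX : X.Nonempty) (hJ : IsClosedTwoSidedIdeal J) :
    cstarPlus A X J ≤ cornerAlgebra hX hJ := by
  have hclosed := isClosed_cornerAlgebra hX hJ
  refine cstarPlus_le hclosed (fun x hx => single_zero_zero_mem_calg hJ hx) fun j hj => ?_
  refine closure_minimal ?_ hclosed (hJ.mem_closure_mul_isSelfAdjoint hj)
  rintro _ ⟨e, ⟨he, -⟩, rfl⟩
  exact single_zero_zero_mul_mem_calg hX hJ hj he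

/-- The *-homomorphism `a ↦ diag(a, 0)` from `C*(X) + J` to `B(X,J)`. -/
def cornerHom (hX : X.Nonempty) (hJ : IsClosedTwoSidedIdeal J) :
    cstarPlus A X J →⋆ₙₐ[ℂ] calg A X J where
  toFun a := ⟨singleDiagHom ℂ 0 (a : A), cstarPlus_le_cornerAlgebra hX hJ a.2⟩
  map_smul' _ _ := Subtype.ext (map_smul _ _ _)
  map_zero' := Subtype.ext (map_zero _)
  map_add' _ _ := Subtype.ext (map_add _ _ _)
  map_mul' _ _ := Subtype.ext (map_mul _ _ _)
  map_star' _ := Subtype.ext (map_star _ _)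

@[simp]
lemma coe_cornerHom (hX : X.Nonempty) (hJ : IsClosedTwoSidedIdeal J) (a : cstarPlus A X J) :
    (cornerHom hX hJ a : Matrix (Fin 2) (Fin 2) A) = Matrix.single 0 0 (a : A) :=
  rfl

/-- The compression `[[a, b], [c, d]] ↦ a` from `B(X,J)` to `C*(X) + J`. -/
def topLeft (hJ : IsClosedTwoSidedIdeal J) : calg A X J →ₗ[ℂ] cstarPlus A X J where
  toFun m := ⟨(m : Matrix (Fin 2) (Fin 2) A) 0 0, (calg_le_blockAlgebra hJ m.2).1⟩
  map_add' _ _ := rfl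
  map_smul' _ _ := rfl

@[simp]
lemma coe_topLeft (hJ : IsClosedTwoSidedIdeal J) (m : calg A X J) :
    (topLeft hJ m : A) = (m : Matrix (Fin 2) (Fin 2) A) 0 0 :=
  rfl

lemma topLeft_one (hJ : IsClosedTwoSidedIdeal J) : topLeft hJ (1 : calg A X J) = 1 :=
  Subtype.ext (by simp)

lemma topLeft_star (hJ : IsClosedTwoSidedIdeal J) (m : calg A X J) :
    topLeft hJ (star m) = star (topLeft hJ m) :=
  rfl

lemma topLeft_mul_sub_mem (hJ : IsClosedTwoSidedIdeal J) (m n : calg A X J) :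
    ((topLeft hJ (m * n) - topLeft hJ m * topLeft hJ n : cstarPlus A X J) : A) ∈ J := by
  simpa [Matrix.mul_apply] using hJ.mul_mem_left _ _ (calg_le_blockAlgebra hJ n.2).2.2.1

end Corner

section Representation

variable {H : Type*} [NormedAddCommGroup H] [InnerProductSpace ℂ H] [CompleteSpace H]

namespace IsStarRep

variable {R : Type*} [Ring R] [Algebra ℂ R] [StarRing R] {π : R → (H →L[ℂ] H)}

lemma map_sub (hπ : IsStarRep π) (x y : R) : π (x - y) = π x - π y := by
  rw [eq_sub_iff_add_eq, ← hπ.map_add, sub_add_cancel]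

lemma comp {S : Type*} [Ring S] [Algebra ℂ S] [StarRing S] (hπ : IsStarRep π) (f : S →⋆ₙₐ[ℂ] R) :
    IsStarRep (π ∘ f) where
  map_add x y := by simp only [Function.comp_apply, _root_.map_add, hπ.map_add]
  map_smul c x := by simp only [Function.comp_apply, _root_.map_smul, hπ.map_smul]
  map_mul x y := by simp only [Function.comp_apply, _root_.map_mul, hπ.map_mul]
  map_star x := by simp only [Function.comp_apply, StarHomClass.map_star, hπ.map_star]

end IsStarRep

lemma IsUnitalStarRep.map_sub_smul_one {R : Type*} [Ring R] [Algebra ℂ R] [StarRing R]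
    {π : R → (H →L[ℂ] H)} (hπ : IsUnitalStarRep π) (x : R) (c : ℂ) :
    π (x - c • 1) = π x - c • 1 := by
  rw [hπ.toIsStarRep.map_sub, hπ.toIsStarRep.map_smul, hπ.map_one]

variable {A : Type*} [CStarAlgebra A] {X J : Set A} {ρ : calg A X J → (H →L[ℂ] H)}
  {π : cstarPlus A X J → (H →L[ℂ] H)}

lemma AnnihilatesM2.comp_cornerHom (hann : AnnihilatesM2 X J ρ) (hX : X.Nonempty)
    (hJ : IsClosedTwoSidedIdeal J) : AnnihilatesJ X J (ρ ∘ cornerHom hX hJ) := fun a ha =>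
  hann _ fun i k => by
    fin_cases i <;> fin_cases k <;> simp [ha, hJ.zero_mem]

lemma AnnihilatesJ.comp_topLeft (hann : AnnihilatesJ X J π) (hJ : IsClosedTwoSidedIdeal J) :
    AnnihilatesM2 X J (π ∘ topLeft hJ) :=
  fun _ hm => hann _ (hm 0 0)

lemma IsUnitalStarRep.comp_topLeft (hπ : IsUnitalStarRep π) (hann : AnnihilatesJ X J π)
    (hJ : IsClosedTwoSidedIdeal J) : IsUnitalStarRep (π ∘ topLeft hJ) where
  toIsStarRep :=
    { map_add x y := by simp only [Function.comp_apply, map_add, hπ.toIsStarRep.map_add]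
      map_smul c x := by simp only [Function.comp_apply, map_smul, hπ.toIsStarRep.map_smul]
      map_mul x y := by
        have h := hann _ (topLeft_mul_sub_mem hJ x y)
        rwa [hπ.toIsStarRep.map_sub, hπ.toIsStarRep.map_mul, sub_eq_zero] at h
      map_star x := by simp only [Function.comp_apply, topLeft_star, hπ.toIsStarRep.map_star] }
  map_one := by rw [Function.comp_apply, topLeft_one, hπ.map_one]

lemma IsUnitalStarRep.isAdaptedPair_comp_cornerHom (hρ : IsUnitalStarRep ρ)
    (hann : AnnihilatesM2 X J ρ) (hX : X.Nonempty) (hJ : IsClosedTwoSidedIdeal J) :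
    IsAdaptedPair X J ρ (ρ ∘ cornerHom hX hJ) := by
  intro m c a hm ha
  obtain ⟨-, h₀₁, h₁₀, -⟩ := calg_le_blockAlgebra hJ m.2
  have hzero : ρ (m - c • 1 - cornerHom hX hJ a) = 0 := hann _ fun i k => by
    fin_cases i <;> fin_cases k <;>
      simp [ha, hJ.zero_mem, h₀₁, h₁₀, hm]
  rwa [hρ.toIsStarRep.map_sub, hρ.map_sub_smul_one, sub_eq_zero] at hzero

lemma IsUnitalStarRep.isAdaptedPair_comp_topLeft (hπ : IsUnitalStarRep π)
    (hJ : IsClosedTwoSidedIdeal J) : IsAdaptedPair X J (π ∘ topLeft hJ) π := by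
  intro m c a _ ha
  rw [Function.comp_apply, ← hπ.map_sub_smul_one]
  exact congrArg π (Subtype.ext ha.symm)

lemma IsAdaptedPair.eq_comp_cornerHom (h : IsAdaptedPair X J ρ π) (hX : X.Nonempty)
    (hJ : IsClosedTwoSidedIdeal J) : π = ρ ∘ cornerHom hX hJ := by
  funext a
  simpa using (h (cornerHom hX hJ a) 0 a (by simpa using hJ.zero_mem)
    (by simp)).symm

lemma IsAdaptedPair.eq_comp_topLeft (h : IsAdaptedPair X J ρ π) (hπ : IsUnitalStarRep π)
    (hJ : IsClosedTwoSidedIdeal J) : ρ = π ∘ topLeft hJ := by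
  funext m
  obtain ⟨c, hc⟩ := mem_unitize_iff.1 (calg_le_blockAlgebra hJ m.2).2.2.2
  have had := h m c (topLeft hJ m - c • 1) hc (by simp)
  rwa [hπ.map_sub_smul_one, sub_left_inj] at had

end Representation

theorem stmt4_general {A : Type*} [CStarAlgebra A] (X J : Set A)
    (hX : X.Nonempty) (hJ : IsClosedTwoSidedIdeal J)
    {H : Type*} [NormedAddCommGroup H] [InnerProductSpace ℂ H] [CompleteSpace H] :
    (∀ ρ : ↥(calg A X J) → (H →L[ℂ] H), IsUnitalStarRep ρ → AnnihilatesM2 X J ρ →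
      ∃! π : ↥(cstarPlus A X J) → (H →L[ℂ] H),
        IsStarRep π ∧ AnnihilatesJ X J π ∧ IsAdaptedPair X J ρ π) ∧
    (∀ π : ↥(cstarPlus A X J) → (H →L[ℂ] H), IsUnitalStarRep π → AnnihilatesJ X J π →
      ∃! ρ : ↥(calg A X J) → (H →L[ℂ] H),
        IsUnitalStarRep ρ ∧ AnnihilatesM2 X J ρ ∧ IsAdaptedPair X J ρ π) := by
  refine ⟨fun ρ hρ hann => ⟨ρ ∘ cornerHom hX hJ, ⟨?_, ?_, ?_⟩, ?_⟩,
    fun π hπ hann => ⟨π ∘ topLeft hJ, ⟨?_, ?_, ?_⟩, ?_⟩⟩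
  · exact hρ.toIsStarRep.comp _
  · exact hann.comp_cornerHom hX hJ
  · exact hρ.isAdaptedPair_comp_cornerHom hann hX hJ
  · exact fun π ⟨_, _, hadapted⟩ => hadapted.eq_comp_cornerHom hX hJ
  · exact hπ.comp_topLeft hann hJ
  · exact hann.comp_topLeft hJ
  · exact hπ.isAdaptedPair_comp_topLeft hJ
  · exact fun ρ ⟨_, _, hadapted⟩ => hadapted.eq_comp_topLeft hπ hJ

/-- Lemma 2.5: (i) every unital *-representation `ρ` of `B(X,J)`
annihilating `M₂(J)` admits a unique *-representation `π` of `C*(X)+J` annihilating `J`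
such that the pair `(ρ, π)` is `(X,J)`-adapted; (ii) every unital *-representation `π` of
`C*(X)+J` annihilating `J` admits a unique unital *-representation `ρ` of `B(X,J)`
annihilating `M₂(J)` such that the pair `(ρ, π)` is `(X,J)`-adapted. -/
theorem stmt4 {A : Type*} [CStarAlgebra A] (X J : Set A)
    (hX : IsOperatorSystem X) (hJ : IsClosedTwoSidedIdeal J)
    {H : Type*} [NormedAddCommGroup H] [InnerProductSpace ℂ H] [CompleteSpace H] :
    -- (i)
    (∀ ρ : ↥(calg A X J) → (H →L[ℂ] H), IsUnitalStarRep ρ → AnnihilatesM2 X J ρ →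
      ∃! π : ↥(cstarPlus A X J) → (H →L[ℂ] H),
        IsStarRep π ∧ AnnihilatesJ X J π ∧ IsAdaptedPair X J ρ π) ∧
    -- (ii)
    (∀ π : ↥(cstarPlus A X J) → (H →L[ℂ] H), IsUnitalStarRep π → AnnihilatesJ X J π →
      ∃! ρ : ↥(calg A X J) → (H →L[ℂ] H),
        IsUnitalStarRep ρ ∧ AnnihilatesM2 X J ρ ∧ IsAdaptedPair X J ρ π) := by
  exact stmt4_general X J ⟨1, hX.one_mem⟩ hJ

end ArvesonCounterexample
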